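/- arXiv:2303.09490 — 3 statements merged into one kernel-verified Lean document; each statement's English description precedes it below -/
import Mathlib

section
/- The negative continued fraction expansion is unique: if [a₀, a₁, …, a_k] and [b₀, b₁, …, b_l] are nonempty finite lists of integers with a_j ≤ −2 for all 1 ≤ j ≤ k and b_j ≤ −2 for all 1 ≤ j ≤ l, and val([a₀, …, a_k]) = val([b₀, …, b_l]), then k = l and a_j = b_j for all j. -/
/-!
Let `t` be a list with all entries at most `-2`. Then `t` is empty or its value is less than `-1`,
so `-1 / val t` lies in `[0, 1)`; hence `val (a :: t)` lies in `[a, a + 1)`, and the first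
coefficient `a` is recovered as the floor of the value (`floor_nctfVal_cons`). Cancelling it gives
the value of the tail. That value is `0` exactly when the tail is empty, so expansions of
different lengths cannot agree, and induction on the list finishes the argument.
-/

/-- The value of a negative (Hirzebruch–Jung) continued fraction
`[a₀, a₁, …, a_k]`, namely `a₀ − 1/(a₁ − 1/(⋯ − 1/a_k))`, with the
convention `1/0 = 0`. -/
def nctfVal (L : List ℤ) : ℚ := L.foldr (fun a r => (a : ℚ) - r⁻¹) 0

theorem nctfVal_cons (a : ℤ) (t : List ℤ) : nctfVal (a :: t) = a - (nctfVal t)⁻¹ := rfl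

theorem neg_inv_mem_Ico {r : ℚ} (h : r = 0 ∨ r < -1) : 0 ≤ -r⁻¹ ∧ -r⁻¹ < 1 := by
  rcases h with rfl | h
  · norm_num
  · rw [← inv_neg]
    exact ⟨inv_nonneg.2 (by linarith), inv_lt_one_of_one_lt₀ (by linarith)⟩

theorem nctfVal_lt_neg_one (t : List ℤ) (ht : ∀ a ∈ t, a ≤ -2) :
    t = [] ∨ nctfVal t < -1 := by
  induction t with
  | nil => exact Or.inl rfl
  | cons a t ih =>
    right
    have h0 := (neg_inv_mem_Ico
      ((ih fun b hb => ht b (List.mem_cons_of_mem _ hb)).imp_left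
        fun h => by rw [h]; rfl)).2
    have ha : (a : ℚ) ≤ -2 := by exact_mod_cast ht a List.mem_cons_self
    rw [nctfVal_cons]
    linarith

theorem floor_nctfVal_cons (a : ℤ) (t : List ℤ) (ht : ∀ b ∈ t, b ≤ -2) :
    ⌊nctfVal (a :: t)⌋ = a := by
  have h := neg_inv_mem_Ico ((nctfVal_lt_neg_one t ht).imp_left fun h => by rw [h]; rfl)
  rw [nctfVal_cons, Int.floor_eq_iff]
  constructor <;> linarith [h.1, h.2]

theorem nctfVal_cons_inj {a b : ℤ} {s t : List ℤ} (hs : ∀ c ∈ s, c ≤ -2)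
    (ht : ∀ c ∈ t, c ≤ -2) (h : nctfVal (a :: s) = nctfVal (b :: t)) :
    a = b ∧ nctfVal s = nctfVal t := by
  have hab : a = b := by
    rw [← floor_nctfVal_cons a s hs, h, floor_nctfVal_cons b t ht]
  subst hab
  rw [nctfVal_cons, nctfVal_cons] at h
  exact ⟨rfl, inv_injective (by linarith)⟩

/-- Uniqueness for lists with every entry at most `-2`, where the empty list is allowed. -/
theorem nctfVal_injOn (s t : List ℤ) (hs : ∀ c ∈ s, c ≤ -2) (ht : ∀ c ∈ t, c ≤ -2)
    (h : nctfVal s = nctfVal t) : s = t := by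
  have h0 : nctfVal [] = 0 := rfl
  induction s generalizing t with
  | nil =>
    rcases nctfVal_lt_neg_one t ht with h' | h'
    · exact h'.symm
    · linarith
  | cons a s ih =>
    cases t with
    | nil =>
      rcases nctfVal_lt_neg_one _ hs with h' | h'
      · exact h'
      · linarith
    | cons b t =>
      have hs' : ∀ c ∈ s, c ≤ -2 := fun c hc => hs c (List.mem_cons_of_mem _ hc)
      have ht' : ∀ c ∈ t, c ≤ -2 := fun c hc => ht c (List.mem_cons_of_mem _ hc)
      obtain ⟨rfl, hst⟩ := nctfVal_cons_inj hs' ht' h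
      rw [ih t hs' ht' hst]

/-- The negative continued fraction expansion with all coefficients after the
first at most `-2` is unique. -/
theorem negContinuedFraction_unique (L₁ L₂ : List ℤ)
    (h₁ : L₁ ≠ []) (h₂ : L₂ ≠ [])
    (ha : ∀ a ∈ L₁.tail, a ≤ -2) (hb : ∀ a ∈ L₂.tail, a ≤ -2)
    (hval : nctfVal L₁ = nctfVal L₂) : L₁ = L₂ := by
  obtain ⟨a, s, rfl⟩ := List.exists_cons_of_ne_nil h₁
  obtain ⟨b, t, rfl⟩ := List.exists_cons_of_ne_nil h₂
  obtain ⟨rfl, hst⟩ := nctfVal_cons_inj ha hb hval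
  rw [nctfVal_injOn s t ha hb hst]
end

section
/- Let [a₀, a₁, …, a_m] be a nonempty finite list of integers with a_j ≤ −2 for all 1 ≤ j ≤ m, and let p_j, q_j be the associated convergent sequences. Then for every 0 ≤ j ≤ m one has p_j ≥ 1 and val([a₀, a₁, …, a_j]) = −q_j/p_j in ℚ. -/
/-- The convergent numerator-denominators `p_j` of `[a₀, …, a_m]`, with the
index shifted by `2`: `pconv L 0 = p_{-2} = -1`, `pconv L 1 = p_{-1} = 0`, and
`pconv L (j+2) = p_j = -a_j * p_{j-1} - p_{j-2}`. -/
def pconv (L : List ℤ) : ℕ → ℤ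
  | 0 => -1
  | 1 => 0
  | (n + 2) => -(L.getD n 0) * pconv L (n + 1) - pconv L n

/-- The convergent sequence `q_j` of `[a₀, …, a_m]`, with the index shifted by
`2`: `qconv L 0 = q_{-2} = 0`, `qconv L 1 = q_{-1} = 1`, and
`qconv L (j+2) = q_j = -a_j * q_{j-1} - q_{j-2}`. -/
def qconv (L : List ℤ) : ℕ → ℤ
  | 0 => 0
  | 1 => 1
  | (n + 2) => -(L.getD n 0) * qconv L (n + 1) - qconv L n

theorem pconv_strictMono_step (L : List ℤ) (h : ∀ a ∈ L.tail, a ≤ -2) (j : ℕ)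
    (hj : j < L.length) : 0 ≤ pconv L (j + 1) ∧ pconv L (j + 1) < pconv L (j + 2) := by
  induction j with
  | zero => simp [pconv]
  | succ n ih =>
    obtain ⟨h0, h1⟩ := ih (by omega)
    have ha : L.getD (n + 1) 0 ≤ -2 := by
      apply h
      cases L with
      | nil => simp at hj
      | cons b T =>
        have hn : n < T.length := by simpa using hj
        simp [List.getD_eq_getElem?_getD, List.getElem?_eq_getElem hn]
    have hrec : pconv L (n + 1 + 2)
        = -(L.getD (n + 1) 0) * pconv L (n + 2) - pconv L (n + 1) := rfl
    refine ⟨by show 0 ≤ pconv L (n + 2); omega, ?_⟩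
    show pconv L (n + 2) < pconv L (n + 1 + 2)
    rw [hrec]
    nlinarith

/-- Effect on the convergents of prepending an entry. The two sides satisfy the same
second-order recursion, so they agree once the first two terms do. -/
theorem conv_cons (a : ℤ) (T : List ℤ) (n : ℕ) :
    pconv (a :: T) (n + 1) = qconv T n ∧
      qconv (a :: T) (n + 1) = -a * qconv T n - pconv T n := by
  induction n using Nat.twoStepInduction with
  | zero => simp [pconv, qconv]
  | one => simp [pconv, qconv]
  | more n ih1 ih2 =>
    have hp : pconv (a :: T) (n + 2 + 1)
        = -(T.getD n 0) * pconv (a :: T) (n + 1 + 1) - pconv (a :: T) (n + 1) := rfl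
    have hq : qconv (a :: T) (n + 2 + 1)
        = -(T.getD n 0) * qconv (a :: T) (n + 1 + 1) - qconv (a :: T) (n + 1) := rfl
    rw [hp, hq, ih1.1, ih1.2, ih2.1, ih2.2]
    refine ⟨rfl, ?_⟩
    simp only [pconv, qconv]
    ring

theorem nctfVal_take (j : ℕ) : ∀ L : List ℤ, (∀ a ∈ L.tail, a ≤ -2) → j < L.length →
    nctfVal (L.take (j + 1)) = -(qconv L (j + 2) : ℚ) / (pconv L (j + 2)) := by
  induction j with
  | zero =>
    rintro (_ | ⟨a, T⟩) h hj
    · simp at hj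
    · simp [nctfVal, pconv, qconv]
  | succ n ih =>
    rintro (_ | ⟨a, T⟩) h hj
    · simp at hj
    · have hT := ih T (fun b hb => h b (List.mem_of_mem_tail hb)) (by simpa using hj)
      have hpos := pconv_strictMono_step (a :: T) h (n + 1) hj
      have hc := conv_cons a T (n + 2)
      have hq : (qconv T (n + 2) : ℚ) ≠ 0 := by
        have : qconv T (n + 2) ≠ 0 := by
          rw [← hc.1]
          exact (lt_of_le_of_lt hpos.1 hpos.2).ne'
        exact_mod_cast this
      have hv : nctfVal ((a :: T).take (n + 1 + 1))
          = (a : ℚ) - (nctfVal (T.take (n + 1)))⁻¹ := rfl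
      show _ = -(qconv (a :: T) (n + 2 + 1) : ℚ) / (pconv (a :: T) (n + 2 + 1))
      rw [hv, hT, hc.1, hc.2, inv_div]
      push_cast
      field_simp
      ring

/-- For a negative continued fraction `[a₀, …, a_m]` with `a_j ≤ -2` for
`j ≥ 1`, the denominators `p_j` are positive and the value of the truncation
`[a₀, …, a_j]` is `-q_j / p_j`. -/
theorem negContinuedFraction_convergents (L : List ℤ) (hne : L ≠ [])
    (h : ∀ a ∈ L.tail, a ≤ -2) (j : ℕ) (hj : j < L.length) :
    1 ≤ pconv L (j + 2) ∧
      nctfVal (L.take (j + 1)) = -(qconv L (j + 2) : ℚ) / (pconv L (j + 2)) := by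
  have hp := pconv_strictMono_step L h j hj
  exact ⟨by omega, nctfVal_take j L h hj⟩
end

section
/- Let p ≥ 2 and q ≥ 1 be coprime integers, and let [a₀, a₁, …, a_m] be a nonempty finite list of integers with a_j ≤ −2 for all 1 ≤ j ≤ m such that val([a₀, …, a_m]) = −q/p. Then the associated convergent sequences satisfy p_m = p and q_m = q. -/
/-- The pair `(N, D)` such that the continued fraction of the list is `-N/D` (as long as no tail has
value zero through `N = 0`), built from the right.
The empty list gets `(1, 0)`, in accordance with `1/0 = 0`. -/
def nctfPair : List ℤ → ℤ × ℤ
  | [] => (1, 0)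
  | a :: L => (-a * (nctfPair L).1 - (nctfPair L).2, (nctfPair L).1)

theorem nctfPair_isCoprime (L : List ℤ) : IsCoprime (nctfPair L).2 (nctfPair L).1 := by
  induction L with
  | nil => exact isCoprime_one_right
  | cons a L ih =>
    obtain ⟨u, v, huv⟩ := ih
    refine ⟨v - u * a, -u, ?_⟩
    simp only [nctfPair]
    linear_combination huv

theorem nctfPair_bounds (L : List ℤ) (h : ∀ a ∈ L, a ≤ -2) :
    0 ≤ (nctfPair L).2 ∧ (nctfPair L).2 < (nctfPair L).1 := by
  induction L with
  | nil => simp [nctfPair]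
  | cons a L ih =>
    obtain ⟨h0, h1⟩ := ih fun b hb => h b (List.mem_cons_of_mem _ hb)
    have ha : a ≤ -2 := h a List.mem_cons_self
    simp only [nctfPair]
    constructor
    · linarith
    · nlinarith

/-- The first entry is unrestricted: only the numerator of the tail is divided by. -/
theorem nctfVal_eq (L : List ℤ) (h : ∀ a ∈ L.tail, a ≤ -2) :
    nctfVal L = -((nctfPair L).1 : ℚ) / (nctfPair L).2 := by
  induction L with
  | nil => simp [nctfPair, nctfVal]
  | cons a L ih =>
    have hb := nctfPair_bounds L h
    have hN : ((nctfPair L).1 : ℚ) ≠ 0 := by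
      have : (nctfPair L).1 ≠ 0 := by omega
      exact_mod_cast this
    have hv : nctfVal (a :: L) = (a : ℚ) - (nctfVal L)⁻¹ := rfl
    rw [hv, ih fun b hb => h b (List.mem_of_mem_tail hb), inv_div]
    simp only [nctfPair]
    push_cast
    field_simp
    ring

/-- Solutions of the convergent recursion depend linearly on their initial values, with the
coefficients of the last term given by `nctfPair`. -/
theorem recurrence_last (L : List ℤ) (x : ℕ → ℤ)
    (hx : ∀ n, x (n + 2) = -(L.getD n 0) * x (n + 1) - x n) :
    x (L.length + 1) = x 1 * (nctfPair L).1 - x 0 * (nctfPair L).2 := by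
  induction L generalizing x with
  | nil => simp [nctfPair]
  | cons a L ih =>
    have h2 : x 2 = -a * x 1 - x 0 := by simpa using hx 0
    -- The shifted sequence solves the recursion of the tail.
    have h3 := ih (fun n => x (n + 1)) fun n => by simpa using hx (n + 1)
    simp only [Nat.reduceAdd, zero_add] at h3
    rw [List.length_cons, h3, h2]
    simp only [nctfPair]
    ring

/-- If `[a₀, …, a_m]` (with `a_j ≤ -2` for `j ≥ 1`) is the negative continued
fraction expansion of `-q/p` with `p ≥ 2`, `q ≥ 1` coprime, then the final
convergents recover `p` and `q`: `p_m = p` and `q_m = q`.  (Note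
`m + 2 = L.length + 1`.) -/
theorem convergents_recover_pq (p q : ℤ) (hp : 2 ≤ p) (hq : 1 ≤ q)
    (hcop : IsCoprime p q) (L : List ℤ) (hne : L ≠ [])
    (h : ∀ a ∈ L.tail, a ≤ -2) (hval : nctfVal L = -(q : ℚ) / p) :
    pconv L (L.length + 1) = p ∧ qconv L (L.length + 1) = q := by
  have hp' : pconv L (L.length + 1) = (nctfPair L).2 := by
    rw [recurrence_last L (pconv L) fun n => by rw [pconv]]
    simp [pconv]
  have hq' : qconv L (L.length + 1) = (nctfPair L).1 := by
    rw [recurrence_last L (qconv L) fun n => by rw [qconv]]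
    simp [qconv]
  rw [hp', hq']
  have hD : 0 < (nctfPair L).2 := by
    cases L with
    | nil => exact absurd rfl hne
    | cons a L =>
      have := nctfPair_bounds L h
      simp only [nctfPair]
      omega
  rw [nctfVal_eq L h] at hval
  have hD' : ((nctfPair L).2 : ℚ) ≠ 0 := by exact_mod_cast hD.ne'
  have hpQ : (p : ℚ) ≠ 0 := by
    have : p ≠ 0 := by omega
    exact_mod_cast this
  rw [div_eq_div_iff hD' hpQ] at hval
  have hcross : (nctfPair L).1 * p = q * (nctfPair L).2 := by
    have : ((nctfPair L).1 : ℚ) * p = q * (nctfPair L).2 := by linarith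
    exact_mod_cast this
  have h1 : p ∣ (nctfPair L).2 := hcop.dvd_of_dvd_mul_left ⟨(nctfPair L).1, by linarith⟩
  have h2 : (nctfPair L).2 ∣ p :=
    (nctfPair_isCoprime L).dvd_of_dvd_mul_left ⟨q, by linarith⟩
  have hDp : (nctfPair L).2 = p := Int.dvd_antisymm hD.le (by omega) h2 h1
  refine ⟨hDp, ?_⟩
  rw [hDp] at hcross
  exact mul_right_cancel₀ (by omega) hcross
end
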